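/- arXiv:2501.07831 — 8 statements merged into one kernel-verified Lean document; each statement's English description precedes it below -/
import Mathlib

section
/- For every real U, the identity F(((γ−1)²/4)·U², U) = ((γ−1)²/2)·U · G(((γ−1)²/4)·U², U) holds. Consequently, the function H^sp(U) = ((γ−1)²/4)·U² satisfies the ODE dH/dU = F(H,U)/G(H,U) at every point U where G(H^sp(U),U) ≠ 0. -/
noncomputable def k₁ (γ μ : ℝ) : ℝ := ((γ + 1) + μ * (3 - γ)) / 2
noncomputable def k₂ (γ μ : ℝ) : ℝ := 2 * (1 - μ) / (γ - 1)
noncomputable def F (γ μ H U : ℝ) : ℝ := 2 * H * (H - (U ^ 2 - k₁ γ μ * U + μ))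
noncomputable def G (γ μ H U : ℝ) : ℝ := H * (U + k₂ γ μ) - U * (U - 1) * (U - μ)
/-- The special solution `H^sp(U) = ((γ-1)²/4) U²`. -/
noncomputable def Hsp (γ U : ℝ) : ℝ := (γ - 1) ^ 2 / 4 * U ^ 2

/-! On a parabola `H = c U²` both `F` and `G` are a monomial times a quadratic in `U`, and the two
quadratics differ only in their linear coefficients, `k₁` and `c k₂ + (1 + μ)`. The value
`c = (γ - 1)² / 4` makes these agree, so there `F / G = 2 c U`, which is the slope of the
parabola. -/

theorem F_mul_sq (γ μ c U : ℝ) :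
    F γ μ (c * U ^ 2) U = 2 * c * U ^ 2 * ((c - 1) * U ^ 2 + k₁ γ μ * U - μ) := by
  unfold F
  ring

theorem G_mul_sq (γ μ c U : ℝ) :
    G γ μ (c * U ^ 2) U = U * ((c - 1) * U ^ 2 + (c * k₂ γ μ + (1 + μ)) * U - μ) := by
  unfold G
  ring

theorem F_mul_sq_eq_mul_G {γ μ c : ℝ} (hc : c * k₂ γ μ + (1 + μ) = k₁ γ μ) (U : ℝ) :
    F γ μ (c * U ^ 2) U = 2 * c * U * G γ μ (c * U ^ 2) U := by
  rw [F_mul_sq, G_mul_sq, hc]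
  ring

theorem sq_div_four_mul_k₂_add {γ : ℝ} (hγ : γ ≠ 1) (μ : ℝ) :
    (γ - 1) ^ 2 / 4 * k₂ γ μ + (1 + μ) = k₁ γ μ := by
  have k₂_mul : k₂ γ μ * (γ - 1) = 2 * (1 - μ) := div_mul_cancel₀ _ (sub_ne_zero.mpr hγ)
  unfold k₁
  linear_combination (γ - 1) / 4 * k₂_mul

theorem F_Hsp {γ : ℝ} (hγ : γ ≠ 1) (μ U : ℝ) :
    F γ μ (Hsp γ U) U = (γ - 1) ^ 2 / 2 * U * G γ μ (Hsp γ U) U := by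
  unfold Hsp
  rw [F_mul_sq_eq_mul_G (sq_div_four_mul_k₂_add hγ μ)]
  ring

theorem hasDerivAt_Hsp (γ U : ℝ) : HasDerivAt (Hsp γ) ((γ - 1) ^ 2 / 2 * U) U := by
  refine ((hasDerivAt_pow 2 U).const_mul ((γ - 1) ^ 2 / 4)).congr_deriv ?_
  push_cast
  ring

theorem stmt0_general {γ : ℝ} (hγ : γ ≠ 1) (μ : ℝ) :
    (∀ U : ℝ, F γ μ (Hsp γ U) U = (γ - 1) ^ 2 / 2 * U * G γ μ (Hsp γ U) U) ∧
    (∀ U : ℝ, G γ μ (Hsp γ U) U ≠ 0 →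
      HasDerivAt (Hsp γ) (F γ μ (Hsp γ U) U / G γ μ (Hsp γ U) U) U) := by
  refine ⟨F_Hsp hγ μ, fun U hG => ?_⟩
  rw [F_Hsp hγ, mul_div_cancel_right₀ _ hG]
  exact hasDerivAt_Hsp γ U

/-- `F(H^sp(U),U) = ((γ-1)²/2) U · G(H^sp(U),U)` for all `U`, and consequently
`H^sp` satisfies `dH/dU = F/G` wherever `G(H^sp(U),U) ≠ 0`. -/
theorem stmt0 (γ μ : ℝ) (hγ1 : 1 < γ) (hγ3 : γ < 3) (hμ0 : 0 < μ) (hμ1 : μ < 1) :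
    (∀ U : ℝ, F γ μ (Hsp γ U) U = (γ - 1) ^ 2 / 2 * U * G γ μ (Hsp γ U) U) ∧
    (∀ U : ℝ, G γ μ (Hsp γ U) U ≠ 0 →
      deriv (Hsp γ) U = F γ μ (Hsp γ U) U / G γ μ (Hsp γ U) U) :=
  (stmt0_general hγ1.ne' μ).imp_right fun h U hG => (h U hG).deriv
end

section
/- A pair of real numbers (U,H) satisfies F(H,U) = 0, G(H,U) = 0 and Δ(H,U) = 0 simultaneously if and only if (U,H) = (1,0) or (U,H) = (2/(3−γ), ((γ−1)/(3−γ))²). In other words, the only triple points of the system are B = (1,0) and D = (2/(3−γ), ((γ−1)/(3−γ))²). -/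
noncomputable def Dlt (H U : ℝ) : ℝ := (U - 1) ^ 2 - H

/-! On the parabola `Δ = 0`, that is `H = (U - 1) ^ 2`, the leading terms in `U` cancel, and `F` and
`G` become `(U - 1) ^ 2` and `U - 1` times nonzero multiples of the same linear factor
`(3 - γ) * U - 2`. Both therefore vanish exactly at `U = 1` and `U = 2 / (3 - γ)`. -/

section TriplePoints

variable {γ μ : ℝ}

theorem Dlt_eq_zero_iff {H U : ℝ} : Dlt H U = 0 ↔ H = (U - 1) ^ 2 := by
  rw [Dlt, sub_eq_zero, eq_comm]

theorem F_sub_one_sq (γ μ U : ℝ) :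
    F γ μ ((U - 1) ^ 2) U = (μ - 1) * (U - 1) ^ 2 * ((3 - γ) * U - 2) := by
  rw [F, k₁]
  ring

theorem G_sub_one_sq (hγ : γ ≠ 1) (μ U : ℝ) :
    G γ μ ((U - 1) ^ 2) U = (1 - μ) / (γ - 1) * (U - 1) * ((3 - γ) * U - 2) := by
  have hγ' : γ - 1 ≠ 0 := sub_ne_zero.mpr hγ
  rw [G, k₂]
  field_simp
  ring

theorem three_sub_mul_sub_two_eq_zero_iff (hγ : γ ≠ 3) {U : ℝ} :
    (3 - γ) * U - 2 = 0 ↔ U = 2 / (3 - γ) := by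
  rw [sub_eq_zero, eq_div_iff (sub_ne_zero.mpr hγ.symm), mul_comm]

theorem F_sub_one_sq_eq_zero_iff (hγ : γ ≠ 3) (hμ : μ ≠ 1) {U : ℝ} :
    F γ μ ((U - 1) ^ 2) U = 0 ↔ U = 1 ∨ U = 2 / (3 - γ) := by
  have hμ' : μ - 1 ≠ 0 := sub_ne_zero.mpr hμ
  rw [F_sub_one_sq, mul_eq_zero, mul_eq_zero_iff_left hμ', sq_eq_zero_iff, sub_eq_zero,
    three_sub_mul_sub_two_eq_zero_iff hγ]

theorem G_sub_one_sq_eq_zero_iff (hγ₁ : γ ≠ 1) (hγ₃ : γ ≠ 3) (hμ : μ ≠ 1) {U : ℝ} :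
    G γ μ ((U - 1) ^ 2) U = 0 ↔ U = 1 ∨ U = 2 / (3 - γ) := by
  have hcoeff : (1 - μ) / (γ - 1) ≠ 0 :=
    div_ne_zero (sub_ne_zero.mpr hμ.symm) (sub_ne_zero.mpr hγ₁)
  rw [G_sub_one_sq hγ₁, mul_eq_zero, mul_eq_zero_iff_left hcoeff, sub_eq_zero,
    three_sub_mul_sub_two_eq_zero_iff hγ₃]

theorem two_div_three_sub_sub_one (hγ : γ ≠ 3) : 2 / (3 - γ) - 1 = (γ - 1) / (3 - γ) := by
  rw [div_sub_one (sub_ne_zero.mpr hγ.symm)]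
  ring

theorem stmt1_general (hγ₁ : γ ≠ 1) (hγ₃ : γ ≠ 3) (hμ : μ ≠ 1) (U H : ℝ) :
    (F γ μ H U = 0 ∧ G γ μ H U = 0 ∧ Dlt H U = 0) ↔
      ((U, H) = ((1 : ℝ), (0 : ℝ)) ∨
        (U, H) = (2 / (3 - γ), ((γ - 1) / (3 - γ)) ^ 2)) := by
  simp only [Prod.mk.injEq, Dlt_eq_zero_iff]
  constructor
  · rintro ⟨hF, -, rfl⟩
    rcases (F_sub_one_sq_eq_zero_iff hγ₃ hμ).mp hF with rfl | rfl
    · exact .inl ⟨rfl, by norm_num⟩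
    · exact .inr ⟨rfl, by rw [two_div_three_sub_sub_one hγ₃]⟩
  · intro hBD
    have hU : U = 1 ∨ U = 2 / (3 - γ) := hBD.imp And.left And.left
    have hH : H = (U - 1) ^ 2 := by
      rcases hBD with ⟨rfl, rfl⟩ | ⟨rfl, rfl⟩
      · norm_num
      · rw [two_div_three_sub_sub_one hγ₃]
    subst hH
    exact ⟨(F_sub_one_sq_eq_zero_iff hγ₃ hμ).mpr hU,
      (G_sub_one_sq_eq_zero_iff hγ₁ hγ₃ hμ).mpr hU, rfl⟩

end TriplePoints

/-- the only triple points (`F = G = Δ = 0`) are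
`B = (1,0)` and `D = (2/(3-γ), ((γ-1)/(3-γ))²)`. -/
theorem stmt1 (γ μ : ℝ) (hγ1 : 1 < γ) (hγ3 : γ < 3) (hμ0 : 0 < μ) (hμ1 : μ < 1) :
    ∀ U H : ℝ, (F γ μ H U = 0 ∧ G γ μ H U = 0 ∧ Dlt H U = 0) ↔
      ((U, H) = ((1 : ℝ), (0 : ℝ)) ∨
        (U, H) = (2 / (3 - γ), ((γ - 1) / (3 - γ)) ^ 2)) :=
  stmt1_general hγ1.ne' hγ3.ne hμ1.ne
end

section
/- The point C satisfies F(H_C,U_C) = 0, G(H_C,U_C) = 0 and Δ(H_C,U_C) ≠ 0, and the slope quadratic at C has exactly two roots, namely C₁ = (γ−1)²μ/(γ+1) and C₂ = (γ−1)·((γ²−2γ+5)μ − (γ+1)²)·μ/(2(γ+1)(γ+1−2μ)); these two roots are distinct and satisfy C₂ < 0 < C₁. -/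
noncomputable def FH (γ μ U H : ℝ) : ℝ := 4 * H - 2 * (U ^ 2 - k₁ γ μ * U + μ)
noncomputable def FU (γ μ U H : ℝ) : ℝ := -2 * H * (2 * U - k₁ γ μ)
noncomputable def GH (γ μ U H : ℝ) : ℝ := U + k₂ γ μ
noncomputable def GU (γ μ U H : ℝ) : ℝ := H - 3 * U ^ 2 + 2 * (1 + μ) * U - μ
/-- The critical point `C = (U_C, H_C)`. -/
noncomputable def UC (γ μ : ℝ) : ℝ := 2 * μ / (γ + 1)
noncomputable def HC (γ μ : ℝ) : ℝ := ((γ - 1) / (γ + 1)) ^ 2 * μ ^ 2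

/-!
On the parabola `H = ((γ - 1) U / 2) ^ 2` the functions `F` and `G` satisfy `F = (dH/dU) G`, so the
parabola is a solution curve. It passes through `C`, where it has slope `C₁`. Differentiating
`F = (dH/dU) G` along any such curve at a zero of `G` gives the slope quadratic, so `C₁` is a root;
the product of the roots, `-F_U / G_H`, then determines `C₂`.
-/

open Filter Topology

lemma quadratic_eq_zero_iff_of_root_of_prod {R : Type*} [CommRing R] [IsDomain R] {a b c r s : R}
    (ha : a ≠ 0) (hr : r ≠ 0) (hroot : a * r ^ 2 - b * r - c = 0) (hprod : a * (r * s) = -c)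
    (x : R) : a * x ^ 2 - b * x - c = 0 ↔ x = r ∨ x = s := by
  have hfactor : r * (a * x ^ 2 - b * x - c) = r * a * ((x - r) * (x - s)) := by
    linear_combination x * hroot + (x - r) * hprod
  rw [← mul_eq_zero_iff_left hr, hfactor, mul_eq_zero_iff_left (mul_ne_zero hr ha),
    mul_eq_zero, sub_eq_zero, sub_eq_zero]

lemma hasDerivAt_mul_of_continuousAt_of_eq_zero {𝕜 : Type*} [NontriviallyNormedField 𝕜]
    {q g : 𝕜 → 𝕜} {g' x : 𝕜} (hq : ContinuousAt q x) (hg : HasDerivAt g g' x) (hgx : g x = 0) :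
    HasDerivAt (fun y ↦ q y * g y) (q x * g') x := by
  rw [hasDerivAt_iff_tendsto_slope] at hg ⊢
  refine ((hq.tendsto.mono_left nhdsWithin_le_nhds).mul hg).congr fun y ↦ ?_
  simp only [slope_def_field, hgx, mul_zero, sub_zero, mul_div_assoc]

section SolutionCurve

variable {γ μ U h' : ℝ} {h q : ℝ → ℝ}

lemma hasDerivAt_F_comp (hh : HasDerivAt h h' U) :
    HasDerivAt (fun V ↦ F γ μ (h V) V) (FH γ μ U (h U) * h' + FU γ μ U (h U)) U := by
  have hquad : HasDerivAt (fun V ↦ V ^ 2 - k₁ γ μ * V + μ) (2 * U - k₁ γ μ) U := by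
    simpa using (((hasDerivAt_id U).pow 2).sub ((hasDerivAt_id U).const_mul (k₁ γ μ))).add_const μ
  refine ((hh.const_mul 2).mul (hh.sub hquad)).congr_deriv ?_
  simp only [FH, FU, Pi.sub_apply]
  ring

lemma hasDerivAt_G_comp (hh : HasDerivAt h h' U) :
    HasDerivAt (fun V ↦ G γ μ (h V) V) (GH γ μ U (h U) * h' + GU γ μ U (h U)) U := by
  have hid := hasDerivAt_id' U
  have hcubic := (hid.mul (hid.sub_const 1)).mul (hid.sub_const μ)
  refine ((hh.mul (hid.add_const (k₂ γ μ))).sub hcubic).congr_deriv ?_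
  simp only [GH, GU, Pi.mul_apply]
  ring

lemma slopeQuadratic_eq_zero_of_eventually_F_eq_mul_G
    (hh : HasDerivAt h (q U) U) (hq : ContinuousAt q U) (hcrit : G γ μ (h U) U = 0)
    (hsol : ∀ᶠ V in 𝓝 U, F γ μ (h V) V = q V * G γ μ (h V) V) :
    GH γ μ U (h U) * q U ^ 2 - (FH γ μ U (h U) - GU γ μ U (h U)) * q U - FU γ μ U (h U) = 0 := by
  have hF := hasDerivAt_F_comp (γ := γ) (μ := μ) hh
  have hqG := hasDerivAt_mul_of_continuousAt_of_eq_zero hq (hasDerivAt_G_comp hh) hcrit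
  linear_combination -hF.unique (hqG.congr_of_eventuallyEq hsol)

end SolutionCurve

/-- The parabola `H = ((γ - 1) U / 2) ^ 2` as a function of `U`, an explicit solution curve of
`dH/dU = F/G` passing through `C`. -/
noncomputable def invariantParabola (γ U : ℝ) : ℝ := ((γ - 1) / 2 * U) ^ 2

/-- The slope of the invariant parabola at `C`, called `C₁` in the statement. -/
noncomputable def parabolaSlope (γ μ : ℝ) : ℝ := (γ - 1) ^ 2 * μ / (γ + 1)

/-- The slope, called `C₂` in the statement, of a solution curve crossing the invariant parabola
at `C`. -/
noncomputable def transverseSlope (γ μ : ℝ) : ℝ :=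
  (γ - 1) * ((γ ^ 2 - 2 * γ + 5) * μ - (γ + 1) ^ 2) * μ / (2 * (γ + 1) * (γ + 1 - 2 * μ))

section InvariantParabola

variable {γ : ℝ} (μ U : ℝ)

lemma hasDerivAt_invariantParabola :
    HasDerivAt (invariantParabola γ) ((γ - 1) ^ 2 / 2 * U) U := by
  refine (((hasDerivAt_id' U).const_mul ((γ - 1) / 2)).pow 2).congr_deriv ?_
  ring

lemma G_invariantParabola (hγ : γ ≠ 1) :
    G γ μ (invariantParabola γ U) U
      = U * ((γ + 1) / 2 * U - μ) * (1 - (3 - γ) / 2 * U) := by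
  have hγ' := sub_ne_zero.mpr hγ
  simp only [G, invariantParabola, k₂]
  field_simp
  ring

lemma F_invariantParabola (hγ : γ ≠ 1) :
    F γ μ (invariantParabola γ U) U
      = (γ - 1) ^ 2 / 2 * U * G γ μ (invariantParabola γ U) U := by
  rw [G_invariantParabola μ U hγ]
  simp only [F, invariantParabola, k₁]
  ring

lemma Dlt_invariantParabola :
    Dlt (invariantParabola γ U) U = (1 - (γ + 1) / 2 * U) * (1 - (3 - γ) / 2 * U) := by
  simp only [Dlt, invariantParabola]
  ring

end InvariantParabola

section PointC

variable {γ μ : ℝ}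

lemma HC_eq_invariantParabola : HC γ μ = invariantParabola γ (UC γ μ) := by
  simp only [HC, UC, invariantParabola]
  ring

lemma parabolaSlope_eq_mul_UC : parabolaSlope γ μ = (γ - 1) ^ 2 / 2 * UC γ μ := by
  simp only [parabolaSlope, UC]
  ring

lemma half_add_one_mul_UC (hγ : γ + 1 ≠ 0) : (γ + 1) / 2 * UC γ μ = μ := by
  simp only [UC]
  field_simp

lemma G_C_eq_zero (hγ : γ ≠ 1) (hγ' : γ + 1 ≠ 0) : G γ μ (HC γ μ) (UC γ μ) = 0 := by
  rw [HC_eq_invariantParabola, G_invariantParabola _ _ hγ, half_add_one_mul_UC hγ', sub_self,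
    mul_zero, zero_mul]

lemma F_C_eq_zero (hγ : γ ≠ 1) (hγ' : γ + 1 ≠ 0) : F γ μ (HC γ μ) (UC γ μ) = 0 := by
  rw [HC_eq_invariantParabola, F_invariantParabola _ _ hγ, ← HC_eq_invariantParabola,
    G_C_eq_zero hγ hγ', mul_zero]

lemma Dlt_C_pos (hγ : 1 < γ) (hμ₀ : 0 < μ) (hμ₁ : μ < 1) : 0 < Dlt (HC γ μ) (UC γ μ) := by
  have hUC : (γ + 1) / 2 * UC γ μ = μ := half_add_one_mul_UC (by linarith)
  have hUC_pos : 0 < UC γ μ := by unfold UC; positivity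
  rw [HC_eq_invariantParabola, Dlt_invariantParabola, hUC]
  have hfactor : 0 < 1 - (3 - γ) / 2 * UC γ μ :=
    calc 0 < (1 - μ) + (γ - 1) * UC γ μ :=
          add_pos (sub_pos.mpr hμ₁) (mul_pos (sub_pos.mpr hγ) hUC_pos)
      _ = 1 - (3 - γ) / 2 * UC γ μ := by linear_combination hUC
  exact mul_pos (sub_pos.mpr hμ₁) hfactor

lemma GH_C (hγ : γ ≠ 1) (hγ' : γ + 1 ≠ 0) :
    GH γ μ (UC γ μ) (HC γ μ) = 2 * (γ + 1 - 2 * μ) / ((γ + 1) * (γ - 1)) := by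
  have hγ_sub := sub_ne_zero.mpr hγ
  simp only [GH, UC, k₂]
  field_simp
  ring

lemma FU_C (hγ : γ + 1 ≠ 0) :
    FU γ μ (UC γ μ) (HC γ μ)
      = -HC γ μ * ((γ ^ 2 - 2 * γ + 5) * μ - (γ + 1) ^ 2) / (γ + 1) := by
  simp only [FU, UC, k₁]
  field_simp
  ring

lemma slopeQuadratic_C_parabolaSlope (hγ : γ ≠ 1) (hγ' : γ + 1 ≠ 0) :
    GH γ μ (UC γ μ) (HC γ μ) * parabolaSlope γ μ ^ 2
      - (FH γ μ (UC γ μ) (HC γ μ) - GU γ μ (UC γ μ) (HC γ μ)) * parabolaSlope γ μ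
      - FU γ μ (UC γ μ) (HC γ μ) = 0 := by
  have hcrit := G_C_eq_zero (μ := μ) hγ hγ'
  rw [HC_eq_invariantParabola] at hcrit ⊢
  rw [parabolaSlope_eq_mul_UC]
  exact slopeQuadratic_eq_zero_of_eventually_F_eq_mul_G (q := fun V ↦ (γ - 1) ^ 2 / 2 * V)
    (hasDerivAt_invariantParabola _) (by fun_prop) hcrit
    (Eventually.of_forall fun V ↦ F_invariantParabola μ V hγ)

lemma GH_C_mul_slopes (hγ : γ ≠ 1) (hγ' : γ + 1 ≠ 0) (hμ : γ + 1 - 2 * μ ≠ 0) :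
    GH γ μ (UC γ μ) (HC γ μ) * (parabolaSlope γ μ * transverseSlope γ μ)
      = -FU γ μ (UC γ μ) (HC γ μ) := by
  have hγ_sub := sub_ne_zero.mpr hγ
  rw [GH_C hγ hγ', FU_C hγ']
  simp only [parabolaSlope, transverseSlope, HC]
  field_simp

lemma slopeQuadratic_C_eq_zero_iff (hγ : γ ≠ 1) (hγ' : γ + 1 ≠ 0) (hμ₀ : μ ≠ 0)
    (hμ : γ + 1 - 2 * μ ≠ 0) (lam : ℝ) :
    GH γ μ (UC γ μ) (HC γ μ) * lam ^ 2
        - (FH γ μ (UC γ μ) (HC γ μ) - GU γ μ (UC γ μ) (HC γ μ)) * lam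
        - FU γ μ (UC γ μ) (HC γ μ) = 0 ↔
      lam = parabolaSlope γ μ ∨ lam = transverseSlope γ μ := by
  have := sub_ne_zero.mpr hγ
  have hGH : GH γ μ (UC γ μ) (HC γ μ) ≠ 0 := by
    rw [GH_C hγ hγ']
    positivity
  have hslope : parabolaSlope γ μ ≠ 0 := by
    unfold parabolaSlope
    positivity
  exact quadratic_eq_zero_iff_of_root_of_prod hGH hslope (slopeQuadratic_C_parabolaSlope hγ hγ')
    (GH_C_mul_slopes hγ hγ' hμ) lam

lemma parabolaSlope_pos (hγ : 1 < γ) (hμ : 0 < μ) : 0 < parabolaSlope γ μ := by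
  have := sub_pos.mpr hγ
  unfold parabolaSlope
  positivity

lemma transverseSlope_neg (hγ : 1 < γ) (hμ₀ : 0 < μ) (hμ₁ : μ < 1) :
    transverseSlope γ μ < 0 := by
  have hγ_sub := sub_pos.mpr hγ
  have := sub_pos.mpr hμ₁
  have hden : 0 < γ + 1 - 2 * μ := by linarith
  have hfactor : (γ ^ 2 - 2 * γ + 5) * μ - (γ + 1) ^ 2 < 0 :=
    calc (γ ^ 2 - 2 * γ + 5) * μ - (γ + 1) ^ 2
        = -((γ + 1) ^ 2 * (1 - μ) + 4 * (γ - 1) * μ) := by ring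
      _ < 0 := neg_neg_of_pos (by positivity)
  exact div_neg_of_neg_of_pos
    (mul_neg_of_neg_of_pos (mul_neg_of_pos_of_neg hγ_sub hfactor) hμ₀) (by positivity)

end PointC

theorem stmt2_general (γ μ : ℝ) (hγ : 1 < γ) (hμ₀ : 0 < μ) (hμ₁ : μ < 1) :
    F γ μ (HC γ μ) (UC γ μ) = 0 ∧ G γ μ (HC γ μ) (UC γ μ) = 0 ∧
    Dlt (HC γ μ) (UC γ μ) ≠ 0 ∧
    (∀ lam : ℝ,
      GH γ μ (UC γ μ) (HC γ μ) * lam ^ 2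
        - (FH γ μ (UC γ μ) (HC γ μ) - GU γ μ (UC γ μ) (HC γ μ)) * lam
        - FU γ μ (UC γ μ) (HC γ μ) = 0 ↔
      lam = parabolaSlope γ μ ∨ lam = transverseSlope γ μ) ∧
    parabolaSlope γ μ ≠ transverseSlope γ μ ∧
    transverseSlope γ μ < 0 ∧ 0 < parabolaSlope γ μ := by
  have hγ_ne : γ ≠ 1 := hγ.ne'
  have hγ_add : γ + 1 ≠ 0 := by linarith
  have hden : γ + 1 - 2 * μ ≠ 0 := by linarith
  have hneg := transverseSlope_neg hγ hμ₀ hμ₁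
  have hpos := parabolaSlope_pos hγ hμ₀
  exact ⟨F_C_eq_zero hγ_ne hγ_add, G_C_eq_zero hγ_ne hγ_add, (Dlt_C_pos hγ hμ₀ hμ₁).ne',
    slopeQuadratic_C_eq_zero_iff hγ_ne hγ_add hμ₀.ne' hden, (hneg.trans hpos).ne', hneg, hpos⟩

/-- `C` is a critical point with `Δ ≠ 0`, and the slope quadratic at `C`
has exactly the two distinct roots `C₁ > 0 > C₂`. -/
theorem stmt2 (γ μ : ℝ) (hγ1 : 1 < γ) (hγ3 : γ < 3) (hμ0 : 0 < μ) (hμ1 : μ < 1) :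
    F γ μ (HC γ μ) (UC γ μ) = 0 ∧ G γ μ (HC γ μ) (UC γ μ) = 0 ∧
    Dlt (HC γ μ) (UC γ μ) ≠ 0 ∧
    (∀ lam : ℝ,
      GH γ μ (UC γ μ) (HC γ μ) * lam ^ 2
        - (FH γ μ (UC γ μ) (HC γ μ) - GU γ μ (UC γ μ) (HC γ μ)) * lam
        - FU γ μ (UC γ μ) (HC γ μ) = 0 ↔
      (lam = (γ - 1) ^ 2 * μ / (γ + 1) ∨
       lam = (γ - 1) * ((γ ^ 2 - 2 * γ + 5) * μ - (γ + 1) ^ 2) * μ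
              / (2 * (γ + 1) * (γ + 1 - 2 * μ)))) ∧
    (γ - 1) ^ 2 * μ / (γ + 1)
      ≠ (γ - 1) * ((γ ^ 2 - 2 * γ + 5) * μ - (γ + 1) ^ 2) * μ
          / (2 * (γ + 1) * (γ + 1 - 2 * μ)) ∧
    (γ - 1) * ((γ ^ 2 - 2 * γ + 5) * μ - (γ + 1) ^ 2) * μ
        / (2 * (γ + 1) * (γ + 1 - 2 * μ)) < 0 ∧
    0 < (γ - 1) ^ 2 * μ / (γ + 1) :=
  stmt2_general γ μ hγ1 hμ0 hμ1
end

section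
/- For every real U, the identity G(((γ−1)²/4)·U², U)·((γ+1)U − 2) = −((γ+1)U − 2μ)·U·Δ(((γ−1)²/4)·U², U) holds. In particular, along the special solution H = ((γ−1)²/4)·U², the equation y·dU/dy = G/Δ reduces to the self-similar Burgers ODE y·dU/dy = −((γ+1)U − 2μ)·U/((γ+1)U − 2) at every U with (γ+1)U ≠ 2 and Δ(((γ−1)²/4)U²,U) ≠ 0. -/
/-! Along the special solution both `G` and `Δ` contain the linear factor `(3 - γ) U - 2`;
once it is cancelled, the numerator and denominator of the Burgers equation are what is left. -/

theorem Hsp_mul_k₂ {γ : ℝ} (hγ : γ ≠ 1) (μ U : ℝ) :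
    Hsp γ U * k₂ γ μ = (γ - 1) * (1 - μ) / 2 * U ^ 2 := by
  have hγ' : γ - 1 ≠ 0 := sub_ne_zero.mpr hγ
  unfold Hsp k₂
  field_simp
  ring

theorem Dlt_Hsp (γ U : ℝ) :
    Dlt (Hsp γ U) U = ((γ + 1) * U - 2) * (((3 - γ) * U - 2) / 4) := by
  unfold Dlt Hsp
  ring

theorem G_Hsp {γ : ℝ} (hγ : γ ≠ 1) (μ U : ℝ) :
    G γ μ (Hsp γ U) U = -(((γ + 1) * U - 2 * μ) * U) * (((3 - γ) * U - 2) / 4) := by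
  calc G γ μ (Hsp γ U) U
      = Hsp γ U * U + Hsp γ U * k₂ γ μ - U * (U - 1) * (U - μ) := by rw [G, mul_add]
    _ = (γ - 1) ^ 2 / 4 * U ^ 2 * U + (γ - 1) * (1 - μ) / 2 * U ^ 2
          - U * (U - 1) * (U - μ) := by rw [Hsp_mul_k₂ hγ, Hsp]
    _ = -(((γ + 1) * U - 2 * μ) * U) * (((3 - γ) * U - 2) / 4) := by ring

theorem stmt3_general {γ : ℝ} (hγ : γ ≠ 1) (μ : ℝ) :
    (∀ U : ℝ, G γ μ (Hsp γ U) U * ((γ + 1) * U - 2)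
      = -(((γ + 1) * U - 2 * μ) * U) * Dlt (Hsp γ U) U) ∧
    (∀ U : ℝ, Dlt (Hsp γ U) U ≠ 0 →
      G γ μ (Hsp γ U) U / Dlt (Hsp γ U) U
        = -(((γ + 1) * U - 2 * μ) * U) / ((γ + 1) * U - 2)) := by
  refine ⟨fun U => ?_, fun U hΔ => ?_⟩
  · rw [G_Hsp hγ, Dlt_Hsp]
    ring
  · rw [Dlt_Hsp] at hΔ
    rw [G_Hsp hγ, Dlt_Hsp, mul_div_mul_right _ _ (right_ne_zero_of_mul hΔ)]

/-- the identity `G(H^sp(U),U)·((γ+1)U-2) = -((γ+1)U-2μ)·U·Δ(H^sp(U),U)`,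
and the resulting reduction of `G/Δ` to the self-similar Burgers right-hand side. -/
theorem stmt3 (γ μ : ℝ) (hγ1 : 1 < γ) (hγ3 : γ < 3) (hμ0 : 0 < μ) (hμ1 : μ < 1) :
    (∀ U : ℝ, G γ μ (Hsp γ U) U * ((γ + 1) * U - 2)
      = -(((γ + 1) * U - 2 * μ) * U) * Dlt (Hsp γ U) U) ∧
    (∀ U : ℝ, (γ + 1) * U ≠ 2 → Dlt (Hsp γ U) U ≠ 0 →
      G γ μ (Hsp γ U) U / Dlt (Hsp γ U) U
        = -(((γ + 1) * U - 2 * μ) * U) / ((γ + 1) * U - 2)) := by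
  obtain ⟨identity, reduction⟩ := stmt3_general hγ1.ne' μ
  exact ⟨identity, fun U _ => reduction U⟩
end

section
/- Let K > 0 and U_C = 2μ/(γ+1), and define Φ : (0,U_C) → ℝ by Φ(U) = K·(U_C − U)^((1−μ)/μ)·U^(−1/μ). Then Φ is positive and differentiable on (0,U_C), satisfies Φ'(U)·g(U) = Φ(U) for every U ∈ (0,U_C) (so that the inverse function solves y·dU/dy = g(U)), is strictly decreasing, and satisfies lim_{U→U_C⁻} Φ(U) = 0 and lim_{U→0⁺} Φ(U) = +∞; hence Φ is a bijection from (0,U_C) onto (0,∞). -/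
open Set Filter Topology

/-- Right-hand side of the self-similar Burgers ODE `y dU/dy = g(U)`. -/
noncomputable def g (γ μ U : ℝ) : ℝ := -(((γ + 1) * U - 2 * μ) * U) / ((γ + 1) * U - 2)
/-- `Φ(U) = K (U_C - U)^((1-μ)/μ) U^(-1/μ)` on `(0, U_C)`. -/
noncomputable def Φ (γ μ K U : ℝ) : ℝ :=
  K * (UC γ μ - U) ^ ((1 - μ) / μ) * U ^ (-(1 / μ))

/-! The logarithmic derivative of `Φ` is the partial fraction decomposition of `1 / g`, which gives
the equation `Φ' g = Φ`. Since `g < 0 < Φ` on `(0, U_C)`, the same equation makes `Φ` strictly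
decreasing. The factor `(U_C - U) ^ ((1 - μ) / μ)` forces the limit `0` at `U_C`, the factor
`U ^ (-1 / μ)` the limit `+∞` at `0`, and the intermediate value theorem yields the bijection. -/

theorem mapsTo_Ioo_Ioi_of_strictAntiOn {α β : Type*} [LinearOrder α] [TopologicalSpace α]
    [OrderTopology α] [DenselyOrdered α] [Preorder β] [TopologicalSpace β] [ClosedIicTopology β]
    {f : α → β} {a b : α} {l : β} (hf : StrictAntiOn f (Ioo a b)) (hb : Tendsto f (𝓝[<] b) (𝓝 l)) :
    MapsTo f (Ioo a b) (Ioi l) := by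
  intro x hx
  obtain ⟨y, hxy, hyb⟩ := exists_between hx.2
  have hy : y ∈ Ioo a b := ⟨hx.1.trans hxy, hyb⟩
  have : (𝓝[<] b).NeBot := nhdsLT_neBot_of_exists_lt ⟨y, hyb⟩
  have hle : ∀ᶠ z in 𝓝[<] b, f z ≤ f y := by
    filter_upwards [Ioo_mem_nhdsLT hyb] with z hz
    exact (hf hy ⟨hy.1.trans hz.1, hz.2⟩ hz.1).le
  exact (le_of_tendsto hb hle).trans_lt (hf hx hy hxy)

theorem bijOn_Ioo_Ioi_of_strictAntiOn {α β : Type*} [ConditionallyCompleteLinearOrder α]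
    [TopologicalSpace α] [OrderTopology α] [DenselyOrdered α] [LinearOrder β] [TopologicalSpace β]
    [OrderClosedTopology β] {f : α → β} {a b : α} {l : β} (hab : a < b)
    (hf : StrictAntiOn f (Ioo a b)) (hcont : ContinuousOn f (Ioo a b))
    (hb : Tendsto f (𝓝[<] b) (𝓝 l)) (ha : Tendsto f (𝓝[>] a) atTop) :
    BijOn f (Ioo a b) (Ioi l) := by
  have : (𝓝[<] b).NeBot := nhdsLT_neBot_of_exists_lt ⟨a, hab⟩
  have : (𝓝[>] a).NeBot := nhdsGT_neBot_of_exists_gt ⟨b, hab⟩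
  refine ⟨mapsTo_Ioo_Ioi_of_strictAntiOn hf hb, hf.injOn, ?_⟩
  exact isPreconnected_Ioo.intermediate_value_Ioi (le_principal_iff.2 (Ioo_mem_nhdsLT hab))
    (le_principal_iff.2 (Ioo_mem_nhdsGT hab)) hcont hb ha

section RpowProduct

variable {a b c x : ℝ}

theorem hasDerivAt_const_sub_rpow_mul_rpow (hxc : x ≠ c) (hx : x ≠ 0) :
    HasDerivAt (fun y ↦ (c - y) ^ a * y ^ b) ((c - x) ^ a * x ^ b * (b / x - a / (c - x))) x := by
  have hcx : c - x ≠ 0 := sub_ne_zero.2 hxc.symm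
  have hleft := ((hasDerivAt_id' x).const_sub c).rpow_const (p := a) (Or.inl hcx)
  have hright := (hasDerivAt_id' x).rpow_const (p := b) (Or.inl hx)
  refine (hleft.mul hright).congr_deriv ?_
  rw [Real.rpow_sub_one hcx, Real.rpow_sub_one hx]
  ring

theorem tendsto_const_sub_rpow_mul_rpow_nhds (hc : c ≠ 0) (ha : 0 < a) :
    Tendsto (fun y ↦ (c - y) ^ a * y ^ b) (𝓝 c) (𝓝 0) := by
  have hcont : ContinuousAt (fun y ↦ (c - y) ^ a * y ^ b) c :=
    ((continuousAt_const.sub continuousAt_id).rpow_const (Or.inr ha.le)).mul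
      (continuousAt_id.rpow_const (Or.inl hc))
  simpa only [ContinuousAt, sub_self, Real.zero_rpow ha.ne', zero_mul] using hcont

theorem tendsto_const_sub_rpow_mul_rpow_nhdsGT_zero (hc : 0 < c) (hb : b < 0) :
    Tendsto (fun y ↦ (c - y) ^ a * y ^ b) (𝓝[>] 0) atTop := by
  have hleft : Tendsto (fun y ↦ (c - y) ^ a) (𝓝[>] 0) (𝓝 (c ^ a)) := by
    have hcont : ContinuousAt (fun y ↦ (c - y) ^ a) 0 :=
      (continuousAt_const.sub continuousAt_id).rpow_const (Or.inl (sub_ne_zero.2 hc.ne'))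
    simpa only [sub_zero] using hcont.tendsto.mono_left nhdsWithin_le_nhds
  exact hleft.pos_mul_atTop (Real.rpow_pos_of_pos hc a) (tendsto_rpow_neg_nhdsGT_zero hb)

end RpowProduct

section Burgers

variable {γ μ K U : ℝ}

theorem UC_pos (hγ : -1 < γ) (hμ : 0 < μ) : 0 < UC γ μ :=
  div_pos (by linarith) (by linarith)

theorem g_neg (hγ : -1 < γ) (hμ : μ < 1) (hU : U ∈ Ioo 0 (UC γ μ)) : g γ μ U < 0 := by
  have hlt : (γ + 1) * U < 2 * μ := (lt_div_iff₀' (by linarith)).1 hU.2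
  have hnum : 0 < -(((γ + 1) * U - 2 * μ) * U) :=
    neg_pos.2 (mul_neg_of_neg_of_pos (sub_neg.2 hlt) hU.1)
  exact div_neg_of_pos_of_neg hnum (by linarith)

-- The pole `U = 2 / (γ + 1)` of `g` is no exception: `g` is `0` there by `x / 0 = 0`, and the
-- right-hand side vanishes.
theorem inv_g_eq_partial_fractions (hγ : γ ≠ -1) (hμ : μ ≠ 0) (hU₀ : U ≠ 0) (hU : U ≠ UC γ μ) :
    (g γ μ U)⁻¹ = -(1 / μ) / U - (1 - μ) / μ / (UC γ μ - U) := by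
  have hγ' : γ + 1 ≠ 0 := fun h ↦ hγ (eq_neg_of_add_eq_zero_left h)
  have hsub : UC γ μ - U = (2 * μ - (γ + 1) * U) / (γ + 1) := by
    rw [UC, sub_div, mul_div_cancel_left₀ U hγ']
  have hne : 2 * μ - (γ + 1) * U ≠ 0 := fun h ↦
    hU (sub_eq_zero.1 (by rw [hsub, h, zero_div])).symm
  rw [hsub, g, ← neg_mul, neg_sub, inv_div]
  field_simp
  ring

theorem Φ_eq_const_mul :
    Φ γ μ K = fun U ↦ K * ((UC γ μ - U) ^ ((1 - μ) / μ) * U ^ (-(1 / μ))) :=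
  funext fun _ ↦ mul_assoc _ _ _

theorem Φ_pos (hK : 0 < K) (hU : U ∈ Ioo 0 (UC γ μ)) : 0 < Φ γ μ K U :=
  mul_pos (mul_pos hK (Real.rpow_pos_of_pos (sub_pos.2 hU.2) _)) (Real.rpow_pos_of_pos hU.1 _)

theorem hasDerivAt_Φ (hγ : γ ≠ -1) (hμ : μ ≠ 0) (hU₀ : U ≠ 0) (hU : U ≠ UC γ μ) :
    HasDerivAt (Φ γ μ K) (Φ γ μ K U / g γ μ U) U := by
  rw [div_eq_mul_inv, inv_g_eq_partial_fractions hγ hμ hU₀ hU, Φ_eq_const_mul, mul_assoc]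
  exact (hasDerivAt_const_sub_rpow_mul_rpow hU hU₀).const_mul K

theorem continuousOn_Φ (hγ : γ ≠ -1) (hμ : μ ≠ 0) : ContinuousOn (Φ γ μ K) (Ioo 0 (UC γ μ)) :=
  fun _ hU ↦ (hasDerivAt_Φ hγ hμ hU.1.ne' hU.2.ne).continuousAt.continuousWithinAt

theorem deriv_Φ_mul_g (hγ : -1 < γ) (hμ₀ : 0 < μ) (hμ₁ : μ < 1) (hU : U ∈ Ioo 0 (UC γ μ)) :
    deriv (Φ γ μ K) U * g γ μ U = Φ γ μ K U := by
  rw [(hasDerivAt_Φ hγ.ne' hμ₀.ne' hU.1.ne' hU.2.ne).deriv, div_mul_cancel₀ _ (g_neg hγ hμ₁ hU).ne]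

theorem strictAntiOn_Φ (hγ : -1 < γ) (hμ₀ : 0 < μ) (hμ₁ : μ < 1) (hK : 0 < K) :
    StrictAntiOn (Φ γ μ K) (Ioo 0 (UC γ μ)) := by
  refine strictAntiOn_of_deriv_neg (convex_Ioo 0 (UC γ μ)) (continuousOn_Φ hγ.ne' hμ₀.ne') ?_
  rw [interior_Ioo]
  intro U hU
  have hmul : 0 < deriv (Φ γ μ K) U * g γ μ U :=
    (Φ_pos hK hU).trans_eq (deriv_Φ_mul_g hγ hμ₀ hμ₁ hU).symm
  exact neg_of_mul_pos_left hmul (g_neg hγ hμ₁ hU).le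

theorem tendsto_Φ_nhds_UC (hγ : γ ≠ -1) (hμ₀ : 0 < μ) (hμ₁ : μ < 1) :
    Tendsto (Φ γ μ K) (𝓝 (UC γ μ)) (𝓝 0) := by
  have hUC : UC γ μ ≠ 0 :=
    div_ne_zero (by positivity) fun h ↦ hγ (eq_neg_of_add_eq_zero_left h)
  have hexp : 0 < (1 - μ) / μ := div_pos (sub_pos.2 hμ₁) hμ₀
  simpa only [Φ_eq_const_mul, mul_zero] using
    (tendsto_const_sub_rpow_mul_rpow_nhds hUC hexp).const_mul K

theorem tendsto_Φ_nhdsGT_zero (hγ : -1 < γ) (hμ : 0 < μ) (hK : 0 < K) :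
    Tendsto (Φ γ μ K) (𝓝[>] 0) atTop := by
  have hexp : -(1 / μ) < 0 := neg_neg_of_pos (one_div_pos.2 hμ)
  rw [Φ_eq_const_mul]
  exact (tendsto_const_sub_rpow_mul_rpow_nhdsGT_zero (UC_pos hγ hμ) hexp).const_mul_atTop hK

end Burgers

theorem stmt4_general (γ μ K : ℝ) (hγ : -1 < γ) (hμ0 : 0 < μ) (hμ1 : μ < 1) (hK : 0 < K) :
    (∀ U ∈ Ioo (0 : ℝ) (UC γ μ), 0 < Φ γ μ K U) ∧
    (∀ U ∈ Ioo (0 : ℝ) (UC γ μ), DifferentiableAt ℝ (Φ γ μ K) U) ∧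
    (∀ U ∈ Ioo (0 : ℝ) (UC γ μ), deriv (Φ γ μ K) U * g γ μ U = Φ γ μ K U) ∧
    StrictAntiOn (Φ γ μ K) (Ioo (0 : ℝ) (UC γ μ)) ∧
    Tendsto (Φ γ μ K) (𝓝[<] (UC γ μ)) (𝓝 0) ∧
    Tendsto (Φ γ μ K) (𝓝[>] (0 : ℝ)) atTop ∧
    BijOn (Φ γ μ K) (Ioo (0 : ℝ) (UC γ μ)) (Ioi (0 : ℝ)) := by
  have hanti := strictAntiOn_Φ hγ hμ0 hμ1 hK
  have hlim_UC : Tendsto (Φ γ μ K) (𝓝[<] (UC γ μ)) (𝓝 0) :=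
    (tendsto_Φ_nhds_UC hγ.ne' hμ0 hμ1).mono_left nhdsWithin_le_nhds
  have hlim_zero := tendsto_Φ_nhdsGT_zero hγ hμ0 hK
  exact ⟨fun _ hU ↦ Φ_pos hK hU,
    fun _ hU ↦ (hasDerivAt_Φ hγ.ne' hμ0.ne' hU.1.ne' hU.2.ne).differentiableAt,
    fun _ hU ↦ deriv_Φ_mul_g hγ hμ0 hμ1 hU, hanti, hlim_UC, hlim_zero,
    bijOn_Ioo_Ioi_of_strictAntiOn (UC_pos hγ hμ0) hanti (continuousOn_Φ hγ.ne' hμ0.ne') hlim_UC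
      hlim_zero⟩

/-- `Φ` is a positive, differentiable, strictly decreasing solution of
`Φ'(U) g(U) = Φ(U)` on `(0,U_C)` with `Φ → 0` at `U_C⁻`, `Φ → ∞` at `0⁺`; hence a
bijection from `(0,U_C)` onto `(0,∞)`. -/
theorem stmt4 (γ μ K : ℝ) (hγ1 : 1 < γ) (hγ3 : γ < 3) (hμ0 : 0 < μ) (hμ1 : μ < 1)
    (hK : 0 < K) :
    (∀ U ∈ Ioo (0 : ℝ) (UC γ μ), 0 < Φ γ μ K U) ∧
    (∀ U ∈ Ioo (0 : ℝ) (UC γ μ), DifferentiableAt ℝ (Φ γ μ K) U) ∧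
    (∀ U ∈ Ioo (0 : ℝ) (UC γ μ), deriv (Φ γ μ K) U * g γ μ U = Φ γ μ K U) ∧
    StrictAntiOn (Φ γ μ K) (Ioo (0 : ℝ) (UC γ μ)) ∧
    Tendsto (Φ γ μ K) (𝓝[<] (UC γ μ)) (𝓝 0) ∧
    Tendsto (Φ γ μ K) (𝓝[>] (0 : ℝ)) atTop ∧
    BijOn (Φ γ μ K) (Ioo (0 : ℝ) (UC γ μ)) (Ioi (0 : ℝ)) :=
  stmt4_general γ μ K (by linarith) hμ0 hμ1 hK
end

section
/- Let K > 0 and U_C = 2μ/(γ+1), and define Φ_L : (−∞,0) → ℝ by Φ_L(U) = K·(U_C − U)^((1−μ)/μ)·(−U)^(−1/μ). Then Φ_L is positive and differentiable, satisfies Φ_L'(U)·g(U) = Φ_L(U) for every U < 0 (so that its inverse solves y·dU/dy = g(U)), is strictly increasing, satisfies lim_{U→−∞} Φ_L(U) = 0 and lim_{U→0⁻} Φ_L(U) = +∞ (hence Φ_L is a bijection from (−∞,0) onto (0,∞)), and moreover lim_{U→−∞} U·Φ_L(U) = −K and lim_{U→0⁻} U·(Φ_L(U))^μ = −K^μ·U_C^(1−μ).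 -/
open Set Filter Topology

/-- `Φ_L(U) = K (U_C - U)^((1-μ)/μ) (-U)^(-1/μ)` on `(-∞, 0)`. -/
noncomputable def ΦL (γ μ K U : ℝ) : ℝ :=
  K * (UC γ μ - U) ^ ((1 - μ) / μ) * (-U) ^ (-(1 / μ))

/-!
The reciprocal of `g` has the partial fraction expansion
`1 / g(U) = ((1 - μ) / μ) / (U - U_C) - (1 / μ) / U`, and this is the logarithmic derivative of
`(U_C - U) ^ ((1 - μ) / μ) * (-U) ^ (-1 / μ)`. Hence `Φ_L' = Φ_L / g` with `Φ_L` and `g` both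
positive on `(-∞, 0)`, which gives the differential equation and the monotonicity. The exponents
sum to `-1`, so `Φ_L` decays like `K / (-U)` at `-∞`; at `0⁻` the first power tends to a positive
constant and the second one blows up, like `1 / (-U)` after raising to the power `μ`.
-/

section PowerProducts

variable {c p q x : ℝ}

theorem hasDerivAt_sub_rpow_mul_neg_rpow (hc : x ≠ c) (hx : x ≠ 0) :
    HasDerivAt (fun y : ℝ => (c - y) ^ p * (-y) ^ q)
      ((c - x) ^ p * (-x) ^ q * (p / (x - c) + q / x)) x := by
  have hcx : c - x ≠ 0 := sub_ne_zero.2 hc.symm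
  have hxc : x - c ≠ 0 := sub_ne_zero.2 hc
  have hsub := ((hasDerivAt_id' x).const_sub c).rpow_const (p := p) (Or.inl hcx)
  have hneg := (hasDerivAt_neg' x).rpow_const (p := q) (Or.inl (neg_ne_zero.2 hx))
  refine (hsub.mul hneg).congr_deriv ?_
  rw [Real.rpow_sub_one hcx, Real.rpow_sub_one (neg_ne_zero.2 hx), ← neg_sub x c]
  field_simp

theorem tendsto_sub_rpow_mul_neg_rpow_atBot (c p : ℝ) :
    Tendsto (fun x : ℝ => (c - x) ^ p * (-x) ^ (-p)) atBot (𝓝 1) := by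
  have hratio : Tendsto (fun x : ℝ => 1 - c * x⁻¹) atBot (𝓝 1) := by
    simpa using (tendsto_inv_atBot_zero.const_mul c).const_sub (1 : ℝ)
  have hpow := hratio.rpow_const (p := p) (Or.inl one_ne_zero)
  rw [Real.one_rpow] at hpow
  refine hpow.congr' ?_
  filter_upwards [eventually_lt_atBot 0, eventually_le_atBot c] with x hx hxc
  have hquot : 1 - c * x⁻¹ = (c - x) / -x := by
    field_simp [hx.ne]
    ring
  rw [hquot, Real.div_rpow (sub_nonneg.2 hxc) (neg_pos.2 hx).le, Real.rpow_neg (neg_pos.2 hx).le,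
    div_eq_mul_inv]

theorem tendsto_sub_rpow_nhdsLT_zero (hc : c ≠ 0) :
    Tendsto (fun x : ℝ => (c - x) ^ p) (𝓝[<] 0) (𝓝 (c ^ p)) := by
  have hsub : Tendsto (fun x : ℝ => c - x) (𝓝 0) (𝓝 c) :=
    (continuous_const.sub continuous_id).tendsto' 0 c (sub_zero c)
  exact (hsub.mono_left nhdsWithin_le_nhds).rpow_const (Or.inl hc)

theorem tendsto_sub_rpow_mul_neg_rpow_nhdsLT_zero (hc : 0 < c) (hq : q < 0) :
    Tendsto (fun x : ℝ => (c - x) ^ p * (-x) ^ q) (𝓝[<] 0) atTop := by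
  have hneg : Tendsto (fun x : ℝ => -x) (𝓝[<] 0) (𝓝[>] 0) := by
    simpa only [neg_zero] using tendsto_neg_nhdsLT (a := (0 : ℝ))
  exact (tendsto_sub_rpow_nhdsLT_zero hc.ne').pos_mul_atTop (Real.rpow_pos_of_pos hc p)
    ((tendsto_rpow_neg_nhdsGT_zero hq).comp hneg)

end PowerProducts

section Profile

variable {γ μ K U : ℝ}

theorem g_pos (hγ : -1 < γ) (hμ : 0 < μ) (hU : U < 0) : 0 < g γ μ U := by
  have hγU : (γ + 1) * U < 0 := mul_neg_of_pos_of_neg (by linarith) hU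
  have hnum : 0 < ((γ + 1) * U - 2 * μ) * U := mul_pos_of_neg_of_neg (by linarith) hU
  exact div_pos_of_neg_of_neg (neg_neg_of_pos hnum) (by linarith)

theorem inv_g (hγ : γ + 1 ≠ 0) (hμ : μ ≠ 0) (hU : U ≠ 0) (hUC : U ≠ UC γ μ) :
    (g γ μ U)⁻¹ = (1 - μ) / μ / (U - UC γ μ) + -(1 / μ) / U := by
  have hfactor : (γ + 1) * U - 2 * μ = (γ + 1) * (U - UC γ μ) := by
    unfold UC
    field_simp
  have hconst : (2 : ℝ) = (γ + 1) * UC γ μ / μ := by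
    unfold UC
    field_simp
  have hsub : U - UC γ μ ≠ 0 := sub_ne_zero.2 hUC
  rw [g, inv_div, hfactor]
  nth_rewrite 1 [hconst]
  field_simp
  ring

theorem ΦL_eq_const_mul :
    ΦL γ μ K = fun U => K * ((UC γ μ - U) ^ ((1 - μ) / μ) * (-U) ^ (-(1 / μ))) :=
  funext fun _ => mul_assoc _ _ _

theorem ΦL_pos (hK : 0 < K) (hU : U < 0) (hUC : U < UC γ μ) : 0 < ΦL γ μ K U :=
  mul_pos (mul_pos hK (Real.rpow_pos_of_pos (sub_pos.2 hUC) _))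
    (Real.rpow_pos_of_pos (neg_pos.2 hU) _)

theorem hasDerivAt_ΦL (hγ : γ + 1 ≠ 0) (hμ : μ ≠ 0) (hU : U ≠ 0) (hUC : U ≠ UC γ μ) :
    HasDerivAt (ΦL γ μ K) (ΦL γ μ K U / g γ μ U) U := by
  rw [div_eq_mul_inv, inv_g hγ hμ hU hUC, ΦL_eq_const_mul, mul_assoc]
  exact (hasDerivAt_sub_rpow_mul_neg_rpow hUC hU).const_mul K

theorem tendsto_mul_ΦL_atBot (hμ : μ ≠ 0) :
    Tendsto (fun U : ℝ => U * ΦL γ μ K U) atBot (𝓝 (-K)) := by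
  have hlim := (tendsto_sub_rpow_mul_neg_rpow_atBot (UC γ μ) ((1 - μ) / μ)).const_mul (-K)
  rw [mul_one] at hlim
  refine hlim.congr' ?_
  filter_upwards [eventually_lt_atBot 0] with U hU
  have hexp : -(1 / μ) = -((1 - μ) / μ) - 1 := by
    field_simp
    ring
  rw [ΦL, hexp, Real.rpow_sub_one (neg_pos.2 hU).ne']
  field_simp [hU.ne]

theorem tendsto_ΦL_atBot (hμ : μ ≠ 0) : Tendsto (ΦL γ μ K) atBot (𝓝 0) := by
  have hlim := tendsto_inv_atBot_zero.mul (tendsto_mul_ΦL_atBot (γ := γ) (K := K) hμ)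
  rw [zero_mul] at hlim
  refine hlim.congr' ?_
  filter_upwards [eventually_ne_atBot 0] with U hU
  exact inv_mul_cancel_left₀ hU _

theorem ΦL_rpow (hμ : μ ≠ 0) (hK : 0 ≤ K) (hU : U < 0) (hUC : U ≤ UC γ μ) :
    ΦL γ μ K U ^ μ = K ^ μ * (UC γ μ - U) ^ (1 - μ) * (-U)⁻¹ := by
  have hsub : 0 ≤ UC γ μ - U := sub_nonneg.2 hUC
  have hneg : 0 ≤ -U := (neg_pos.2 hU).le
  have hexp : -(1 / μ) * μ = -1 := by field_simp
  rw [ΦL, Real.mul_rpow (by positivity) (by positivity), Real.mul_rpow hK (by positivity),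
    ← Real.rpow_mul hsub, ← Real.rpow_mul hneg, div_mul_cancel₀ _ hμ, hexp, Real.rpow_neg_one]

theorem hasDerivAt_ΦL_of_neg (hγ : -1 < γ) (hμ : 0 < μ) (hU : U < 0) :
    HasDerivAt (ΦL γ μ K) (ΦL γ μ K U / g γ μ U) U :=
  hasDerivAt_ΦL (by linarith) hμ.ne' hU.ne (hU.trans (UC_pos hγ hμ)).ne

theorem continuousOn_ΦL (hγ : -1 < γ) (hμ : 0 < μ) : ContinuousOn (ΦL γ μ K) (Iio 0) :=
  fun _ hU => (hasDerivAt_ΦL_of_neg hγ hμ hU).continuousAt.continuousWithinAt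

theorem deriv_ΦL_mul_g (hγ : -1 < γ) (hμ : 0 < μ) (hU : U < 0) :
    deriv (ΦL γ μ K) U * g γ μ U = ΦL γ μ K U := by
  rw [(hasDerivAt_ΦL_of_neg hγ hμ hU).deriv, div_mul_cancel₀ _ (g_pos hγ hμ hU).ne']

theorem strictMonoOn_ΦL (hγ : -1 < γ) (hμ : 0 < μ) (hK : 0 < K) :
    StrictMonoOn (ΦL γ μ K) (Iio 0) := by
  refine strictMonoOn_of_deriv_pos (convex_Iio 0) (continuousOn_ΦL hγ hμ) fun U hU => ?_
  rw [interior_Iio, mem_Iio] at hU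
  rw [(hasDerivAt_ΦL_of_neg hγ hμ hU).deriv]
  exact div_pos (ΦL_pos hK hU (hU.trans (UC_pos hγ hμ))) (g_pos hγ hμ hU)

theorem tendsto_ΦL_nhdsLT_zero (hγ : -1 < γ) (hμ : 0 < μ) (hK : 0 < K) :
    Tendsto (ΦL γ μ K) (𝓝[<] 0) atTop := by
  rw [ΦL_eq_const_mul]
  exact (tendsto_sub_rpow_mul_neg_rpow_nhdsLT_zero (UC_pos hγ hμ)
    (neg_neg_of_pos (one_div_pos.2 hμ))).const_mul_atTop hK

theorem bijOn_ΦL (hγ : -1 < γ) (hμ : 0 < μ) (hK : 0 < K) :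
    BijOn (ΦL γ μ K) (Iio 0) (Ioi 0) := by
  refine ⟨fun U hU => ΦL_pos hK hU (lt_trans hU (UC_pos hγ hμ)),
    (strictMonoOn_ΦL hγ hμ hK).injOn, ?_⟩
  exact isPreconnected_Iio.intermediate_value_Ioi (le_principal_iff.2 (Iio_mem_atBot 0))
    (le_principal_iff.2 self_mem_nhdsWithin) (continuousOn_ΦL hγ hμ) (tendsto_ΦL_atBot hμ.ne')
    (tendsto_ΦL_nhdsLT_zero hγ hμ hK)

theorem tendsto_mul_ΦL_rpow_nhdsLT_zero (hγ : -1 < γ) (hμ : 0 < μ) (hK : 0 ≤ K) :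
    Tendsto (fun U : ℝ => U * ΦL γ μ K U ^ μ) (𝓝[<] 0)
      (𝓝 (-(K ^ μ * UC γ μ ^ (1 - μ)))) := by
  have hC := UC_pos hγ hμ
  refine ((tendsto_sub_rpow_nhdsLT_zero hC.ne').const_mul (K ^ μ)).neg.congr' ?_
  filter_upwards [self_mem_nhdsWithin] with U (hU : U < 0)
  rw [ΦL_rpow hμ.ne' hK hU (hU.trans hC).le]
  field_simp [hU.ne]

end Profile

theorem stmt6_general {γ μ K : ℝ} (hγ : -1 < γ) (hμ : 0 < μ) (hK : 0 < K) :
    (∀ U ∈ Iio (0 : ℝ), 0 < ΦL γ μ K U) ∧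
    (∀ U ∈ Iio (0 : ℝ), DifferentiableAt ℝ (ΦL γ μ K) U) ∧
    (∀ U ∈ Iio (0 : ℝ), deriv (ΦL γ μ K) U * g γ μ U = ΦL γ μ K U) ∧
    StrictMonoOn (ΦL γ μ K) (Iio (0 : ℝ)) ∧
    Tendsto (ΦL γ μ K) atBot (𝓝 0) ∧
    Tendsto (ΦL γ μ K) (𝓝[<] (0 : ℝ)) atTop ∧
    BijOn (ΦL γ μ K) (Iio (0 : ℝ)) (Ioi (0 : ℝ)) ∧
    Tendsto (fun U : ℝ => U * ΦL γ μ K U) atBot (𝓝 (-K)) ∧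
    Tendsto (fun U : ℝ => U * (ΦL γ μ K U) ^ μ) (𝓝[<] (0 : ℝ))
      (𝓝 (-(K ^ μ * (UC γ μ) ^ (1 - μ)))) :=
  ⟨fun _ hU => ΦL_pos hK hU (lt_trans hU (UC_pos hγ hμ)),
    fun _ hU => (hasDerivAt_ΦL_of_neg hγ hμ hU).differentiableAt,
    fun _ hU => deriv_ΦL_mul_g hγ hμ hU,
    strictMonoOn_ΦL hγ hμ hK,
    tendsto_ΦL_atBot hμ.ne',
    tendsto_ΦL_nhdsLT_zero hγ hμ hK,
    bijOn_ΦL hγ hμ hK,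
    tendsto_mul_ΦL_atBot hμ.ne',
    tendsto_mul_ΦL_rpow_nhdsLT_zero hγ hμ hK.le⟩

/-- `Φ_L` is a positive, differentiable, strictly increasing solution of
`Φ_L'(U) g(U) = Φ_L(U)` on `(-∞,0)`, with `Φ_L → 0` as `U → -∞` and `Φ_L → ∞` as
`U → 0⁻` (hence a bijection onto `(0,∞)`), and moreover `U Φ_L(U) → -K` as `U → -∞`
and `U (Φ_L(U))^μ → -K^μ U_C^(1-μ)` as `U → 0⁻`. -/
theorem stmt6 (γ μ K : ℝ) (hγ1 : 1 < γ) (hγ3 : γ < 3) (hμ0 : 0 < μ) (hμ1 : μ < 1)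
    (hK : 0 < K) :
    (∀ U ∈ Iio (0 : ℝ), 0 < ΦL γ μ K U) ∧
    (∀ U ∈ Iio (0 : ℝ), DifferentiableAt ℝ (ΦL γ μ K) U) ∧
    (∀ U ∈ Iio (0 : ℝ), deriv (ΦL γ μ K) U * g γ μ U = ΦL γ μ K U) ∧
    StrictMonoOn (ΦL γ μ K) (Iio (0 : ℝ)) ∧
    Tendsto (ΦL γ μ K) atBot (𝓝 0) ∧
    Tendsto (ΦL γ μ K) (𝓝[<] (0 : ℝ)) atTop ∧
    BijOn (ΦL γ μ K) (Iio (0 : ℝ)) (Ioi (0 : ℝ)) ∧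
    Tendsto (fun U : ℝ => U * ΦL γ μ K U) atBot (𝓝 (-K)) ∧
    Tendsto (fun U : ℝ => U * (ΦL γ μ K U) ^ μ) (𝓝[<] (0 : ℝ))
      (𝓝 (-(K ^ μ * (UC γ μ) ^ (1 - μ)))) :=
  stmt6_general (by linarith) hμ0 hK
end

section
/- The point D satisfies F(H_D,U_D) = 0, G(H_D,U_D) = 0 and Δ(H_D,U_D) = 0, and the slope quadratic at D has exactly two roots, namely C₁ = (γ−1)²/(3−γ) and C₂ = (γ−1)·(−(γ−3)²μ + γ²−2γ+5)/(2(3−γ)·((γ−3)μ+2)); these two roots satisfy C₂ > C₁ > 0. -/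
/-- The critical point `D = (U_D, H_D)`. -/
noncomputable def UD (γ : ℝ) : ℝ := 2 / (3 - γ)
noncomputable def HD (γ : ℝ) : ℝ := ((γ - 1) / (3 - γ)) ^ 2

/-- The slope quadratic at `(U, H)`, whose roots are the possible slopes `dH/dU` of solution curves
of `dH/dU = F/G` through that point when it is critical. -/
noncomputable def slopeQuadratic (γ μ U H lam : ℝ) : ℝ :=
  GH γ μ U H * lam ^ 2 - (FH γ μ U H - GU γ μ U H) * lam - FU γ μ U H

/-- The root `C₁` of the slope quadratic at `D`, the smaller one for `1 < γ < 3`, `0 < μ < 1`. -/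
noncomputable def C₁ (γ : ℝ) : ℝ := (γ - 1) ^ 2 / (3 - γ)

/-- The root `C₂` of the slope quadratic at `D`, the larger one for `1 < γ < 3`, `0 < μ < 1`. It has
the junk value `0` when `(γ - 3) * μ + 2 = 0`, where the quadratic loses its leading term. -/
noncomputable def C₂ (γ μ : ℝ) : ℝ :=
  (γ - 1) * (-(γ - 3) ^ 2 * μ + γ ^ 2 - 2 * γ + 5) / (2 * (3 - γ) * ((γ - 3) * μ + 2))

theorem quadratic_eq_zero_iff_of_vieta {R : Type*} [CommRing R] [NoZeroDivisors R]
    {a b c x₁ x₂ : R} (ha : a ≠ 0) (hb : a * (x₁ + x₂) = b) (hc : a * (x₁ * x₂) = -c) (x : R) :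
    a * x ^ 2 - b * x - c = 0 ↔ x = x₁ ∨ x = x₂ := by
  have factored : a * x ^ 2 - b * x - c = a * ((x - x₁) * (x - x₂)) := by
    linear_combination x * hb - hc
  rw [factored, mul_eq_zero_iff_left ha, mul_eq_zero, sub_eq_zero, sub_eq_zero]

section

variable {γ μ U H : ℝ}

theorem F_eq_of_Dlt_eq_zero (h : Dlt H U = 0) :
    F γ μ H U = (1 - μ) * H * (2 - (3 - γ) * U) := by
  unfold Dlt at h
  unfold F k₁
  linear_combination -2 * H * h

theorem G_eq_of_Dlt_eq_zero (hγ1 : γ ≠ 1) (h : Dlt H U = 0) :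
    G γ μ H U = -((1 - μ) * (U - 1) * (2 - (3 - γ) * U) / (γ - 1)) := by
  have hγ1' : γ - 1 ≠ 0 := sub_ne_zero.2 hγ1
  obtain rfl : H = (U - 1) ^ 2 := (sub_eq_zero.1 h).symm
  unfold G k₂
  field_simp
  ring

theorem FH_eq_of_F_eq_zero (hH : H ≠ 0) (hF : F γ μ H U = 0) : FH γ μ U H = 2 * H := by
  have hzero : H - (U ^ 2 - k₁ γ μ * U + μ) = 0 :=
    (mul_eq_zero_iff_left (mul_ne_zero two_ne_zero hH)).1 hF
  unfold FH
  linear_combination 2 * hzero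

theorem HD_ne_zero (hγ1 : γ ≠ 1) (hγ3 : γ ≠ 3) : HD γ ≠ 0 :=
  pow_ne_zero 2 (div_ne_zero (sub_ne_zero.2 hγ1) (sub_ne_zero.2 hγ3.symm))

theorem three_sub_mul_UD (hγ3 : γ ≠ 3) : (3 - γ) * UD γ = 2 :=
  mul_div_cancel₀ 2 (sub_ne_zero.2 hγ3.symm)

theorem Dlt_D (hγ3 : γ ≠ 3) : Dlt (HD γ) (UD γ) = 0 := by
  have hγ3' : 3 - γ ≠ 0 := sub_ne_zero.2 hγ3.symm
  unfold Dlt HD UD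
  field_simp
  ring

theorem F_D (hγ3 : γ ≠ 3) : F γ μ (HD γ) (UD γ) = 0 := by
  rw [F_eq_of_Dlt_eq_zero (Dlt_D hγ3), three_sub_mul_UD hγ3, sub_self, mul_zero]

theorem G_D (hγ1 : γ ≠ 1) (hγ3 : γ ≠ 3) : G γ μ (HD γ) (UD γ) = 0 := by
  rw [G_eq_of_Dlt_eq_zero hγ1 (Dlt_D hγ3), three_sub_mul_UD hγ3, sub_self, mul_zero, zero_div,
    neg_zero]

theorem FH_D (hγ1 : γ ≠ 1) (hγ3 : γ ≠ 3) : FH γ μ (UD γ) (HD γ) = 2 * HD γ :=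
  FH_eq_of_F_eq_zero (HD_ne_zero hγ1 hγ3) (F_D hγ3)

theorem FU_D (hγ3 : γ ≠ 3) :
    FU γ μ (UD γ) (HD γ) =
      -((γ - 1) ^ 2 * (-(γ - 3) ^ 2 * μ + γ ^ 2 - 2 * γ + 5) / (3 - γ) ^ 3) := by
  have hγ3' : 3 - γ ≠ 0 := sub_ne_zero.2 hγ3.symm
  unfold FU k₁ HD UD
  field_simp
  ring

theorem GH_D (hγ1 : γ ≠ 1) (hγ3 : γ ≠ 3) :
    GH γ μ (UD γ) (HD γ) = 2 * ((γ - 3) * μ + 2) / ((3 - γ) * (γ - 1)) := by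
  have hγ1' : γ - 1 ≠ 0 := sub_ne_zero.2 hγ1
  have hγ3' : 3 - γ ≠ 0 := sub_ne_zero.2 hγ3.symm
  unfold GH k₂ UD
  field_simp
  ring

theorem GU_D (hγ3 : γ ≠ 3) :
    GU γ μ (UD γ) (HD γ) =
      (γ ^ 2 - 6 * γ + 1 + (3 - γ) * (γ + 1) * μ) / (3 - γ) ^ 2 := by
  have hγ3' : 3 - γ ≠ 0 := sub_ne_zero.2 hγ3.symm
  unfold GU HD UD
  field_simp
  ring

theorem GH_D_ne_zero (hγ1 : γ ≠ 1) (hγ3 : γ ≠ 3) (hμ : (γ - 3) * μ + 2 ≠ 0) :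
    GH γ μ (UD γ) (HD γ) ≠ 0 := by
  rw [GH_D hγ1 hγ3]
  exact div_ne_zero (mul_ne_zero two_ne_zero hμ)
    (mul_ne_zero (sub_ne_zero.2 hγ3.symm) (sub_ne_zero.2 hγ1))

theorem GH_D_mul_C₁ (hγ1 : γ ≠ 1) (hγ3 : γ ≠ 3) :
    GH γ μ (UD γ) (HD γ) * C₁ γ = 2 * (γ - 1) * ((γ - 3) * μ + 2) / (3 - γ) ^ 2 := by
  have hγ1' : γ - 1 ≠ 0 := sub_ne_zero.2 hγ1
  rw [GH_D hγ1 hγ3, C₁]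
  field_simp

theorem GH_D_mul_C₂ (hγ1 : γ ≠ 1) (hγ3 : γ ≠ 3) (hμ : (γ - 3) * μ + 2 ≠ 0) :
    GH γ μ (UD γ) (HD γ) * C₂ γ μ =
      (-(γ - 3) ^ 2 * μ + γ ^ 2 - 2 * γ + 5) / (3 - γ) ^ 2 := by
  have hγ1' : γ - 1 ≠ 0 := sub_ne_zero.2 hγ1
  rw [GH_D hγ1 hγ3, C₂]
  field_simp

theorem GH_D_mul_C₁_add_C₂ (hγ1 : γ ≠ 1) (hγ3 : γ ≠ 3) (hμ : (γ - 3) * μ + 2 ≠ 0) :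
    GH γ μ (UD γ) (HD γ) * (C₁ γ + C₂ γ μ) =
      FH γ μ (UD γ) (HD γ) - GU γ μ (UD γ) (HD γ) := by
  have hγ3' : 3 - γ ≠ 0 := sub_ne_zero.2 hγ3.symm
  rw [mul_add, GH_D_mul_C₁ hγ1 hγ3, GH_D_mul_C₂ hγ1 hγ3 hμ, FH_D hγ1 hγ3, GU_D hγ3, HD]
  field_simp
  ring

theorem GH_D_mul_C₁_mul_C₂ (hγ1 : γ ≠ 1) (hγ3 : γ ≠ 3) (hμ : (γ - 3) * μ + 2 ≠ 0) :
    GH γ μ (UD γ) (HD γ) * (C₁ γ * C₂ γ μ) = -FU γ μ (UD γ) (HD γ) := by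
  have hγ3' : 3 - γ ≠ 0 := sub_ne_zero.2 hγ3.symm
  rw [mul_left_comm, GH_D_mul_C₂ hγ1 hγ3 hμ, FU_D hγ3, C₁]
  field_simp

theorem slopeQuadratic_D_eq_zero_iff (hγ1 : γ ≠ 1) (hγ3 : γ ≠ 3) (hμ : (γ - 3) * μ + 2 ≠ 0)
    (lam : ℝ) :
    slopeQuadratic γ μ (UD γ) (HD γ) lam = 0 ↔ lam = C₁ γ ∨ lam = C₂ γ μ :=
  quadratic_eq_zero_iff_of_vieta (GH_D_ne_zero hγ1 hγ3 hμ) (GH_D_mul_C₁_add_C₂ hγ1 hγ3 hμ)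
    (GH_D_mul_C₁_mul_C₂ hγ1 hγ3 hμ) lam

theorem C₁_pos_iff (hγ1 : γ ≠ 1) : 0 < C₁ γ ↔ γ < 3 :=
  (div_pos_iff_of_pos_left (sq_pos_of_ne_zero (sub_ne_zero.2 hγ1))).trans sub_pos

theorem C₂_sub_C₁ (hγ3 : γ ≠ 3) (hμ : (γ - 3) * μ + 2 ≠ 0) :
    C₂ γ μ - C₁ γ =
      (γ - 1) * ((1 - μ) * (3 - γ) + μ * (2 * (γ - 1))) / (2 * ((γ - 3) * μ + 2)) := by
  have hγ3' : 3 - γ ≠ 0 := sub_ne_zero.2 hγ3.symm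
  unfold C₁ C₂
  field_simp
  ring

theorem C₁_lt_C₂_iff (hγ3 : γ ≠ 3) (hμ : (γ - 3) * μ + 2 ≠ 0) :
    C₁ γ < C₂ γ μ ↔
      0 < (γ - 1) * ((1 - μ) * (3 - γ) + μ * (2 * (γ - 1))) / ((γ - 3) * μ + 2) := by
  rw [← sub_pos, C₂_sub_C₁ hγ3 hμ, div_mul_eq_div_div_swap, div_pos_iff_of_pos_right two_pos]

theorem sub_three_mul_add_two_pos (hγ1 : 1 < γ) (hμ0 : 0 ≤ μ) (hμ1 : μ ≤ 1) :
    0 < (γ - 3) * μ + 2 := by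
  have hconvex : 0 < (1 - μ) * 2 + μ * (γ - 1) :=
    convex_Ioi (0 : ℝ) two_pos (sub_pos.2 hγ1) (sub_nonneg.2 hμ1) hμ0 (sub_add_cancel 1 μ)
  linear_combination hconvex

theorem slope_gap_pos (hγ1 : 1 < γ) (hγ3 : γ < 3) (hμ0 : 0 ≤ μ) (hμ1 : μ ≤ 1) :
    0 < (γ - 1) * ((1 - μ) * (3 - γ) + μ * (2 * (γ - 1))) / ((γ - 3) * μ + 2) := by
  have hγ1' : 0 < γ - 1 := sub_pos.2 hγ1
  have hconvex : 0 < (1 - μ) * (3 - γ) + μ * (2 * (γ - 1)) :=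
    convex_Ioi (0 : ℝ) (sub_pos.2 hγ3) (mul_pos two_pos hγ1') (sub_nonneg.2 hμ1) hμ0
      (sub_add_cancel 1 μ)
  exact div_pos (mul_pos hγ1' hconvex) (sub_three_mul_add_two_pos hγ1 hμ0 hμ1)

theorem stmt8_general (hγ1 : γ ≠ 1) (hγ3 : γ ≠ 3) (hμ : (γ - 3) * μ + 2 ≠ 0) :
    F γ μ (HD γ) (UD γ) = 0 ∧ G γ μ (HD γ) (UD γ) = 0 ∧ Dlt (HD γ) (UD γ) = 0 ∧
      (∀ lam : ℝ, slopeQuadratic γ μ (UD γ) (HD γ) lam = 0 ↔ lam = C₁ γ ∨ lam = C₂ γ μ) ∧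
      (C₁ γ < C₂ γ μ ↔
        0 < (γ - 1) * ((1 - μ) * (3 - γ) + μ * (2 * (γ - 1))) / ((γ - 3) * μ + 2)) ∧
      (0 < C₁ γ ↔ γ < 3) :=
  ⟨F_D hγ3, G_D hγ1 hγ3, Dlt_D hγ3, slopeQuadratic_D_eq_zero_iff hγ1 hγ3 hμ,
    C₁_lt_C₂_iff hγ3 hμ, C₁_pos_iff hγ1⟩

end

/-- `D` is a triple point (`F = G = Δ = 0`), and the slope quadratic at `D`
has exactly the two roots `C₁` and `C₂`, with `C₂ > C₁ > 0`. -/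
theorem stmt8 (γ μ : ℝ) (hγ1 : 1 < γ) (hγ3 : γ < 3) (hμ0 : 0 < μ) (hμ1 : μ < 1) :
    F γ μ (HD γ) (UD γ) = 0 ∧ G γ μ (HD γ) (UD γ) = 0 ∧ Dlt (HD γ) (UD γ) = 0 ∧
    (∀ lam : ℝ,
      GH γ μ (UD γ) (HD γ) * lam ^ 2
        - (FH γ μ (UD γ) (HD γ) - GU γ μ (UD γ) (HD γ)) * lam
        - FU γ μ (UD γ) (HD γ) = 0 ↔
      (lam = (γ - 1) ^ 2 / (3 - γ) ∨
       lam = (γ - 1) * (-(γ - 3) ^ 2 * μ + γ ^ 2 - 2 * γ + 5)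
              / (2 * (3 - γ) * ((γ - 3) * μ + 2)))) ∧
    (γ - 1) ^ 2 / (3 - γ)
      < (γ - 1) * (-(γ - 3) ^ 2 * μ + γ ^ 2 - 2 * γ + 5)
          / (2 * (3 - γ) * ((γ - 3) * μ + 2)) ∧
    0 < (γ - 1) ^ 2 / (3 - γ) := by
  obtain ⟨hF, hG, hΔ, hroots, hlt, hpos⟩ := stmt8_general hγ1.ne' hγ3.ne
    (sub_three_mul_add_two_pos hγ1 hμ0.le hμ1.le).ne'
  exact ⟨hF, hG, hΔ, hroots, hlt.2 (slope_gap_pos hγ1 hγ3 hμ0.le hμ1.le), hpos.2 hγ3⟩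
end

section
/- Let c = γ(1−μ)/(1+k₂). Then the following two limits hold as U → 1 with U ≠ 1: lim F(c(U−1), U)/Δ(c(U−1), U) = (γ−1)(μ−1), and lim G(c(U−1), U)/Δ(c(U−1), U) = (1−γ)(1+k₂)/γ. (These give the values of dH/dz and dU/dz at the point B = (1,0) for the solution curve leaving B with slope c, where z = ln(−y).) -/
open Filter Topology

/-!
Along a curve `H = h U` with `h 1 = 0` and slope `m ≠ 0` at `U = 1`, the functions `F`, `G` and
`Δ` all vanish at `U = 1`, and `Δ` has derivative `-m` there. So `F / Δ` and `G / Δ` tend to the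
quotients of the first derivatives. The first quotient does not depend on `m`; the second does, and
takes the stated value for `m = c`.
-/

theorem tendsto_div_of_hasDerivAt {𝕜 : Type*} [NontriviallyNormedField 𝕜] {f g : 𝕜 → 𝕜}
    {f' g' a : 𝕜} (hf : HasDerivAt f f' a) (hg : HasDerivAt g g' a) (hfa : f a = 0)
    (hga : g a = 0) (hg' : g' ≠ 0) :
    Tendsto (fun x => f x / g x) (𝓝[≠] a) (𝓝 (f' / g')) := by
  refine (hf.tendsto_slope.div hg.tendsto_slope hg').congr' ?_
  filter_upwards [self_mem_nhdsWithin] with x hx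
  have hxa : x - a ≠ 0 := sub_ne_zero.mpr hx
  simp only [Pi.div_apply, slope_def_field, hfa, hga, sub_zero, div_div_div_cancel_right₀ hxa]

section Curve

variable {γ μ m : ℝ} {h : ℝ → ℝ}

theorem hasDerivAt_F (hh : HasDerivAt h m 1) (h1 : h 1 = 0) :
    HasDerivAt (fun U => F γ μ (h U) U) ((γ - 1) * (1 - μ) * m) 1 := by
  have hq : HasDerivAt (fun U : ℝ => U ^ 2 - k₁ γ μ * U + μ) (2 - k₁ γ μ) 1 := by
    simpa using
      (((hasDerivAt_id' (1 : ℝ)).fun_pow 2).fun_sub ((hasDerivAt_id' 1).const_mul _)).add_const μ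
  have hq1 : (1 : ℝ) ^ 2 - k₁ γ μ * 1 + μ = -((γ - 1) * (1 - μ) / 2) := by
    rw [k₁]
    ring
  refine ((hh.const_mul 2).fun_mul (hh.fun_sub hq)).congr_deriv ?_
  rw [h1, hq1]
  ring

theorem hasDerivAt_G (hh : HasDerivAt h m 1) (h1 : h 1 = 0) :
    HasDerivAt (fun U => G γ μ (h U) U) (m * (1 + k₂ γ μ) - (1 - μ)) 1 := by
  have hid := hasDerivAt_id' (1 : ℝ)
  refine ((hh.fun_mul (hid.add_const (k₂ γ μ))).fun_sub
    ((hid.fun_mul (hid.sub_const 1)).fun_mul (hid.sub_const μ))).congr_deriv ?_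
  rw [h1]
  ring

theorem hasDerivAt_Dlt (hh : HasDerivAt h m 1) :
    HasDerivAt (fun U => Dlt (h U) U) (-m) 1 := by
  simpa [Dlt] using (((hasDerivAt_id' (1 : ℝ)).sub_const 1).fun_pow 2).fun_sub hh

theorem tendsto_F_div_Dlt (hh : HasDerivAt h m 1) (h1 : h 1 = 0) (hm : m ≠ 0) :
    Tendsto (fun U => F γ μ (h U) U / Dlt (h U) U) (𝓝[≠] 1) (𝓝 ((γ - 1) * (μ - 1))) := by
  convert tendsto_div_of_hasDerivAt (hasDerivAt_F hh h1) (hasDerivAt_Dlt hh)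
    (by simp [F, h1]) (by simp [Dlt, h1]) (neg_ne_zero.mpr hm) using 2
  field_simp
  ring

theorem tendsto_G_div_Dlt (hh : HasDerivAt h m 1) (h1 : h 1 = 0) (hm : m ≠ 0) :
    Tendsto (fun U => G γ μ (h U) U / Dlt (h U) U) (𝓝[≠] 1)
      (𝓝 ((1 - μ) / m - (1 + k₂ γ μ))) := by
  convert tendsto_div_of_hasDerivAt (hasDerivAt_G hh h1) (hasDerivAt_Dlt hh)
    (by simp [G, h1]) (by simp [Dlt, h1]) (neg_ne_zero.mpr hm) using 2
  field_simp
  ring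

end Curve

theorem one_add_k₂_ne_zero {γ μ : ℝ} (hγ1 : γ ≠ 1) (hγμ : γ + 1 ≠ 2 * μ) : 1 + k₂ γ μ ≠ 0 := by
  have hγ : γ - 1 ≠ 0 := sub_ne_zero.mpr hγ1
  rw [k₂, one_add_div hγ]
  refine div_ne_zero (fun h => hγμ ?_) hγ
  linarith

theorem stmt14_general {γ μ : ℝ} (hγ0 : γ ≠ 0) (hγ1 : γ ≠ 1) (hμ1 : μ ≠ 1)
    (hγμ : γ + 1 ≠ 2 * μ) {h : ℝ → ℝ}
    (hh : HasDerivAt h (γ * (1 - μ) / (1 + k₂ γ μ)) 1) (h1 : h 1 = 0) :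
    Tendsto (fun U => F γ μ (h U) U / Dlt (h U) U) (𝓝[≠] 1) (𝓝 ((γ - 1) * (μ - 1))) ∧
    Tendsto (fun U => G γ μ (h U) U / Dlt (h U) U) (𝓝[≠] 1)
      (𝓝 ((1 - γ) * (1 + k₂ γ μ) / γ)) := by
  have hμ : 1 - μ ≠ 0 := sub_ne_zero.mpr hμ1.symm
  have hk : 1 + k₂ γ μ ≠ 0 := one_add_k₂_ne_zero hγ1 hγμ
  have hc : γ * (1 - μ) / (1 + k₂ γ μ) ≠ 0 := div_ne_zero (mul_ne_zero hγ0 hμ) hk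
  refine ⟨tendsto_F_div_Dlt hh h1 hc, ?_⟩
  convert tendsto_G_div_Dlt (γ := γ) (μ := μ) hh h1 hc using 2
  field_simp

/-- with `c = γ(1-μ)/(1+k₂)`, along `H = c(U-1)` one has, as `U → 1`
with `U ≠ 1`, `F/Δ → (γ-1)(μ-1)` and `G/Δ → (1-γ)(1+k₂)/γ`. -/
theorem stmt14 (γ μ : ℝ) (hγ1 : 1 < γ) (hγ3 : γ < 3) (hμ0 : 0 < μ) (hμ1 : μ < 1) :
    Tendsto (fun U : ℝ =>
        F γ μ (γ * (1 - μ) / (1 + k₂ γ μ) * (U - 1)) U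
          / Dlt (γ * (1 - μ) / (1 + k₂ γ μ) * (U - 1)) U)
      (𝓝[≠] (1 : ℝ)) (𝓝 ((γ - 1) * (μ - 1))) ∧
    Tendsto (fun U : ℝ =>
        G γ μ (γ * (1 - μ) / (1 + k₂ γ μ) * (U - 1)) U
          / Dlt (γ * (1 - μ) / (1 + k₂ γ μ) * (U - 1)) U)
      (𝓝[≠] (1 : ℝ)) (𝓝 ((1 - γ) * (1 + k₂ γ μ) / γ)) :=
  stmt14_general (by linarith) hγ1.ne' hμ1.ne (by linarith)
    (by simpa using ((hasDerivAt_id' (1 : ℝ)).sub_const 1).const_mul _) (by simp)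
end
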